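/- Let n and k be positive integers such that p = kn + 1 is prime and 1^k, 2^k, …, n^k are pairwise incongruent modulo p. Then the map c : K_n → ℤ/pℤ given by c(m) = m^k mod p is an n-satisfactory coloring of K_n: c attains exactly n distinct values on K_n, and for every a ∈ K_n and all integers i, j with 1 ≤ i < j ≤ n, (ia)^k ≢ (ja)^k (mod p). -/

import Mathlib

/-- The `n`-core: the set of `n`-smooth positive integers. -/
def Kcore (n : ℕ) : Set ℕ := {m : ℕ | 0 < m ∧ ∀ p : ℕ, p.Prime → p ∣ m → p ≤ n}

/-!
Let `F` be a field with `k * n + 1` elements. The `k`-th powers of nonzero elements of `F` are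
`n`-th roots of unity, of which there are at most `n`; the `n` distinct powers `1 ^ k, …, n ^ k`
already exhaust them. Everything else is cancellation of `a ^ k`, so it only has to be seen that no
`n`-smooth number `a` vanishes in `F`, that is, that none of `1, …, n` does: `n = 0` contradicts
`k * n + 1 = 0`, and `i = 0` with `i < n` would give `(i + 1) ^ k = 1 ^ k`.
-/

/-- An `n`-satisfactory coloring of the `n`-core: exactly `n` colors occur, and `a, 2a, …, na` have
distinct colors for each `a` in the core. The coloring is a function on all of `ℕ`, whose values
outside the core are irrelevant. -/
def IsSatisfactoryColoring {α : Type*} (n : ℕ) (c : ℕ → α) : Prop :=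
  (c '' Kcore n).ncard = n ∧ ∀ a ∈ Kcore n, Set.InjOn (fun i ↦ c (i * a)) (Set.Icc 1 n)

theorem injOn_Icc_iff_forall_lt_ne {α β : Type*} [LinearOrder α] {f : α → β} {a b : α} :
    Set.InjOn f (Set.Icc a b) ↔ ∀ i j, a ≤ i → i < j → j ≤ b → f i ≠ f j := by
  refine ⟨fun hf i j hai hij hjb h ↦ hij.ne ?_, fun hf ↦ ?_⟩
  · exact hf ⟨hai, hij.le.trans hjb⟩ ⟨hai.trans hij.le, hjb⟩ h
  · exact Set.injOn_iff_injective.mpr <| .of_lt_imp_ne fun i j hij ↦ hf i j i.2.1 hij j.2.2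

theorem Icc_one_subset_Kcore (n : ℕ) : Set.Icc 1 n ⊆ Kcore n :=
  fun _ hi ↦ ⟨hi.1, fun _ _ hpi ↦ (Nat.le_of_dvd hi.1 hpi).trans hi.2⟩

theorem natCast_ne_zero_of_mem_Kcore {R : Type*} [Semiring R] [Nontrivial R] [NoZeroDivisors R]
    {n m : ℕ} (hprime : ∀ p : ℕ, p.Prime → p ≤ n → (p : R) ≠ 0) (hm : m ∈ Kcore n) :
    (m : R) ≠ 0 := by
  rw [← Nat.prod_primeFactorsList hm.1.ne', Nat.cast_list_prod]
  refine List.prod_ne_zero fun hzero ↦ ?_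
  obtain ⟨p, hp, hp0⟩ := List.mem_map.mp hzero
  have hpp := Nat.prime_of_mem_primeFactorsList hp
  exact hprime p hpp (hm.2 p hpp (Nat.dvd_of_mem_primeFactorsList hp)) hp0

theorem natCast_ne_zero_of_injOn_pow {R : Type*} [Ring R] [Nontrivial R] {n k i : ℕ}
    (hR : ((k * n + 1 : ℕ) : R) = 0) (hinj : Set.InjOn (fun i : ℕ ↦ (i : R) ^ k) (Set.Icc 1 n))
    (hi : i ∈ Set.Icc 1 n) : (i : R) ≠ 0 := by
  intro hi0
  obtain rfl | hin := hi.2.eq_or_lt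
  · simp [hi0] at hR
  · have hpow : ((i + 1 : ℕ) : R) ^ k = ((1 : ℕ) : R) ^ k := by simp [hi0]
    have := hinj ⟨i.succ_pos, hin⟩ ⟨le_rfl, hi.1.trans hi.2⟩ hpow
    have := hi.1
    omega

theorem pow_pow_eq_one_of_card_eq {G : Type*} [GroupWithZero G] {n k : ℕ}
    (hG : Nat.card G = k * n + 1) {x : G} (hx : x ≠ 0) : (x ^ k) ^ n = 1 := by
  have hunits : Nat.card Gˣ = k * n := by rw [Nat.card_units, hG, Nat.add_sub_cancel]
  simpa [hunits, pow_mul] using congrArg Units.val (pow_card_eq_one' (x := Units.mk0 x hx))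

theorem ncard_setOf_pow_eq_one_le {R : Type*} [CommRing R] [IsDomain R] {n : ℕ} (hn : 0 < n) :
    {x : R | x ^ n = 1}.ncard ≤ n := by
  classical
  have hroots : {x : R | x ^ n = 1} = (Polynomial.nthRoots n (1 : R)).toFinset := by
    ext x
    simp [Polynomial.mem_nthRoots hn]
  rw [hroots, Set.ncard_coe_finset]
  exact (Multiset.toFinset_card_le _).trans (Polynomial.card_nthRoots n 1)

theorem strong_representative_gives_satisfactory_coloring_general {F : Type*} [Field F] {n k : ℕ}
    (hF : Nat.card F = k * n + 1)
    (hinj : Set.InjOn (fun i : ℕ ↦ (i : F) ^ k) (Set.Icc 1 n)) :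
    IsSatisfactoryColoring n fun m : ℕ ↦ (m : F) ^ k := by
  have : Finite F := Nat.finite_of_card_ne_zero (hF ▸ Nat.succ_ne_zero _)
  have hn : 0 < n := by
    have hcard : 1 < Nat.card F := Finite.one_lt_card
    exact Nat.pos_of_ne_zero fun h ↦ by simp [hF, h] at hcard
  have hcast : ((k * n + 1 : ℕ) : F) = 0 := by
    have := Fintype.ofFinite F
    rw [← hF, Nat.card_eq_fintype_card, Nat.cast_card_eq_zero]
  have hcore : ∀ a ∈ Kcore n, (a : F) ≠ 0 := fun a ↦ natCast_ne_zero_of_mem_Kcore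
    fun p hp hpn ↦ natCast_ne_zero_of_injOn_pow hcast hinj ⟨hp.one_le, hpn⟩
  refine ⟨le_antisymm ?_ ?_, fun a ha i hi j hj hij ↦ hinj hi hj ?_⟩
  · have hsub : (fun m : ℕ ↦ (m : F) ^ k) '' Kcore n ⊆ {x | x ^ n = 1} :=
      Set.image_subset_iff.mpr fun a ha ↦ pow_pow_eq_one_of_card_eq hF (hcore a ha)
    exact (Set.ncard_le_ncard hsub).trans (ncard_setOf_pow_eq_one_le hn)
  · calc n = (Set.Icc 1 n).ncard := by simp [Set.ncard_eq_toFinset_card']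
      _ = ((fun i : ℕ ↦ (i : F) ^ k) '' Set.Icc 1 n).ncard := hinj.ncard_image.symm
      _ ≤ _ := Set.ncard_le_ncard (Set.image_mono (Icc_one_subset_Kcore n))
  · simpa [mul_pow, pow_ne_zero k (hcore a ha)] using hij

/-- If `p = k*n + 1` is prime and `1^k, …, n^k` are pairwise incongruent mod `p`, then
`c(m) = m^k mod p` is an `n`-satisfactory coloring of `K_n`: it attains exactly `n`
distinct values on `K_n`, and `(i*a)^k ≢ (j*a)^k (mod p)` for `a ∈ K_n` and
`1 ≤ i < j ≤ n`. -/
theorem strong_representative_gives_satisfactory_coloring (n k : ℕ)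
    (hn : 0 < n) (hk : 0 < k) (hp : Nat.Prime (k * n + 1))
    (hdist : ∀ i j : ℕ, 1 ≤ i → i < j → j ≤ n →
      (i : ZMod (k * n + 1)) ^ k ≠ (j : ZMod (k * n + 1)) ^ k) :
    Set.ncard {x : ZMod (k * n + 1) | ∃ m ∈ Kcore n, (m : ZMod (k * n + 1)) ^ k = x} = n ∧
    ∀ a ∈ Kcore n, ∀ i j : ℕ, 1 ≤ i → i < j → j ≤ n →
      ((i * a : ℕ) : ZMod (k * n + 1)) ^ k ≠ ((j * a : ℕ) : ZMod (k * n + 1)) ^ k := by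
  have : Fact (k * n + 1).Prime := ⟨hp⟩
  obtain ⟨hcard, hinj⟩ := strong_representative_gives_satisfactory_coloring_general
    (Nat.card_zmod (k * n + 1)) (injOn_Icc_iff_forall_lt_ne.mpr hdist)
  exact ⟨hcard, fun a ha ↦ injOn_Icc_iff_forall_lt_ne.mp (hinj a ha)⟩
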